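/- arXiv:1812.06643 — 2 statements merged into one kernel-verified Lean document; each statement's English description precedes it below -/
import Mathlib

section
/- For real a with |a| < 1 and real θ, if ln a denotes the natural logarithm of a (with 0 < a < 1), then ∑_{k=-∞}^∞ (-ln a)/(π((ln a)² + (θ + 2πk)²)) = (1 - a²)/(2π(1 + a² - 2a cos θ)). -/
open Real

/-!
The map `z ↦ exp (I z)` covers the punctured unit disk by the upper half-plane, and the points
`z + 2πk` are the preimages of `exp (I z)`. Summing the half-plane kernel `im z / (π |z|²)` over
them gives, through the partial fraction expansion of the cotangent, `-im cot (z / 2) / (2π)`. The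
cotangent is a Möbius function of `q = exp (I z)`, namely `-I (1 + q) / (1 - q)`, so its imaginary
part is minus the Poisson kernel of the disk at `q`.
-/

section Cotangent

open Complex ComplexConjugate

theorem summable_one_div_add_int_sub_one_div_add_int {z w : ℂ} (hz : z ∈ integerComplement)
    (hw : w ∈ integerComplement) : Summable fun k : ℤ ↦ 1 / (z + k) - 1 / (w + k) := by
  have h : Summable fun k : ℤ ↦ ((z + k) * (w + k))⁻¹ := by
    refine EisensteinSeries.summable_inv_of_isBigO_rpow_inv (a := 2) one_lt_two ?_
    simpa [pow_two] using (EisensteinSeries.linear_inv_isBigO_right 1 w).mul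
      (EisensteinSeries.linear_inv_isBigO_right 1 z)
  refine (h.mul_left (w - z)).congr fun k ↦ ?_
  have hzk := integerComplement_add_ne_zero hz k
  have hwk := integerComplement_add_ne_zero hw k
  field_simp
  ring

-- `∑ 1 / (z + k)` over `ℤ` converges only as a symmetric limit; subtracting its value at a second
-- point makes it absolutely convergent.
theorem hasSum_one_div_add_int_sub_one_div_add_int {z w : ℂ} (hz : z ∈ integerComplement)
    (hw : w ∈ integerComplement) :
    HasSum (fun k : ℤ ↦ 1 / (z + k) - 1 / (w + k)) (π * cot (π * z) - π * cot (π * w)) := by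
  set f : ℤ → ℂ := fun k ↦ 1 / (z + k) - 1 / (w + k) with hf
  have hasSum_cotTerm {x : ℂ} (hx : x ∈ integerComplement) :
      HasSum (cotTerm x) (π * cot (π * x) - 1 / x) :=
    (summable_cotTerm hx).hasSum_iff_tendsto_nat.mpr (tendsto_logDeriv_euler_cot_sub hx)
  have hpairs : HasSum (fun n : ℕ ↦ f (n + 1 : ℕ) + f (-(n + 1 : ℕ)))
      (π * cot (π * z) - 1 / z - (π * cot (π * w) - 1 / w)) := by
    refine ((hasSum_cotTerm hz).sub (hasSum_cotTerm hw)).congr_fun fun n ↦ ?_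
    simp only [hf, cotTerm]
    push_cast
    ring
  have hsum : HasSum f (∑' k, f k) :=
    (summable_one_div_add_int_sub_one_div_add_int hz hw).hasSum
  have hunique : (∑' k, f k) + f 0 - (f 0 + f 0) =
      π * cot (π * z) - 1 / z - (π * cot (π * w) - 1 / w) :=
    HasSum.unique (by simpa using (hasSum_nat_add_iff' 1).mpr hsum.nat_add_neg) hpairs
  have hf0 : f 0 = 1 / z - 1 / w := by simp [hf]
  have hvalue : π * cot (π * z) - π * cot (π * w) = ∑' k, f k := by
    linear_combination -hunique - hf0
  rwa [hvalue]

theorem hasSum_im_div_normSq_add_int {z : ℂ} (hz : z ∈ integerComplement) :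
    HasSum (fun k : ℤ ↦ z.im / normSq (z + k)) (-π * (cot (π * z)).im) := by
  have hconj_mem : conj z ∈ integerComplement := by
    rintro ⟨n, hn⟩
    exact hz ⟨n, by simpa using congrArg conj hn⟩
  have hcot : cot (π * conj z) = conj (cot (π * z)) := by
    rw [← cot_conj, map_mul, conj_ofReal]
  have hterm (k : ℤ) :
      z.im / normSq (z + k) = -1 / 2 * (1 / (z + k) - 1 / (conj z + k)).im := by
    have hinv : 1 / (conj z + k) = conj (1 / (z + k)) := by simp
    rw [hinv, sub_im, conj_im, one_div, inv_im, add_im, intCast_im]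
    ring
  have hvalue : -π * (cot (π * z)).im =
      -1 / 2 * (π * cot (π * z) - π * cot (π * conj z)).im := by
    rw [hcot, sub_im, im_ofReal_mul, im_ofReal_mul, conj_im]
    ring
  rw [hvalue]
  exact ((hasSum_im (hasSum_one_div_add_int_sub_one_div_add_int hz hconj_mem)).mul_left
    (-1 / 2)).congr_fun hterm

theorem im_cot_pi_mul (z : ℂ) :
    (cot (π * z)).im = -poissonKernel 0 (exp (2 * π * I * z)) 1 := by
  have hcot : cot (π * z) = -I * herglotzRieszKernel 0 (exp (2 * π * I * z)) 1 := by
    rw [cot_pi_eq_exp_ratio, herglotzRieszKernel_def, sub_zero, sub_zero, add_comm,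
      div_mul_eq_div_div_swap, div_I]
    ring
  rw [hcot, poissonKernel_eq_re_herglotzRieszKernel]
  simp

end Cotangent

section PoissonKernel

open Complex ComplexConjugate

theorem poissonKernel_circleMap (c : ℂ) (r R θ φ : ℝ) :
    poissonKernel c (circleMap c r θ) (circleMap c R φ) =
      (R ^ 2 - r ^ 2) / (R ^ 2 + r ^ 2 - 2 * R * r * Real.cos (φ - θ)) := by
  have hinner : (circleMap 0 R φ * conj (circleMap 0 r θ)).re = R * r * Real.cos (φ - θ) := by
    rw [conj_circleMap_zero, circleMap_zero_mul, circleMap_zero_re, sub_eq_add_neg]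
  have hdist : ‖circleMap 0 R φ - circleMap 0 r θ‖ ^ 2 =
      R ^ 2 + r ^ 2 - 2 * R * r * Real.cos (φ - θ) := by
    rw [← normSq_eq_norm_sq, normSq_sub, hinner]
    simp only [normSq_eq_norm_sq, norm_circleMap_zero, sq_abs]
    ring
  simp only [poissonKernel_def, circleMap_sub_center, hdist, norm_circleMap_zero, sq_abs]

theorem hasSum_im_div_pi_mul_normSq_add_two_pi_mul_int {z : ℂ} (hz : exp (I * z) ≠ 1) :
    HasSum (fun k : ℤ ↦ z.im / (π * normSq (z + 2 * π * k)))
      (poissonKernel 0 (exp (I * z)) 1 / (2 * π)) := by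
  have hmem : z / (2 * π) ∈ integerComplement := by
    rintro ⟨n, hn⟩
    refine hz (exp_eq_one_iff.mpr ⟨n, ?_⟩)
    rw [hn]
    field_simp
  have hterm (k : ℤ) : z.im / (π * normSq (z + 2 * π * k)) =
      1 / (2 * π ^ 2) * ((z / (2 * π)).im / normSq (z / (2 * π) + k)) := by
    have hscale : z + 2 * π * k = ((2 * π : ℝ) : ℂ) * (z / (2 * π) + k) := by
      push_cast
      field_simp
    have him : (z / (2 * π)).im = z.im / (2 * π) := by
      rw [← ofReal_ofNat, ← ofReal_mul, div_ofReal_im]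
    rw [hscale, normSq_mul, normSq_ofReal, him]
    field_simp
  have hvalue : poissonKernel 0 (exp (I * z)) 1 / (2 * π) =
      1 / (2 * π ^ 2) * (-π * (cot (π * (z / (2 * π)))).im) := by
    have hexp : 2 * π * I * (z / (2 * π)) = I * z := by field_simp
    rw [im_cot_pi_mul, hexp]
    field_simp
  rw [hvalue]
  exact ((hasSum_im_div_normSq_add_int hmem).mul_left _).congr_fun hterm

end PoissonKernel

theorem poisson_kernel_sum_general {a : ℝ} (ha0 : 0 < a) (ha1 : a ≠ 1) (θ : ℝ) :
    HasSum (fun k : ℤ ↦ (-Real.log a) / (π * ((Real.log a) ^ 2 + (θ + 2 * π * k) ^ 2)))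
      ((1 - a ^ 2) / (2 * π * (1 + a ^ 2 - 2 * a * Real.cos θ))) := by
  set z : ℂ := ⟨θ, -Real.log a⟩ with hz
  have hexp : Complex.exp (Complex.I * z) = circleMap 0 a θ := by
    have hIz : Complex.I * z = Real.log a + θ * Complex.I := by
      apply Complex.ext <;> simp [hz]
    rw [hIz, Complex.exp_add, ← Complex.ofReal_exp, Real.exp_log ha0, circleMap_zero]
  have hne : Complex.exp (Complex.I * z) ≠ 1 := fun h ↦ by
    have hnorm := congrArg norm h
    rw [hexp, norm_circleMap_zero, abs_of_pos ha0, norm_one] at hnorm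
    exact ha1 hnorm
  have hterm (k : ℤ) : -Real.log a / (π * (Real.log a ^ 2 + (θ + 2 * π * k) ^ 2)) =
      z.im / (π * Complex.normSq (z + 2 * π * k)) := by
    have hcoord : z + 2 * π * k =
        ((θ + 2 * π * k : ℝ) : ℂ) + ((-Real.log a : ℝ) : ℂ) * Complex.I := by
      apply Complex.ext <;> simp [hz]
    rw [hcoord, Complex.normSq_add_mul_I, neg_sq, add_comm (Real.log a ^ 2)]
  have hvalue : (1 - a ^ 2) / (2 * π * (1 + a ^ 2 - 2 * a * Real.cos θ)) =
      poissonKernel 0 (Complex.exp (Complex.I * z)) 1 / (2 * π) := by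
    have hone : (1 : ℂ) = circleMap 0 1 0 := by simp [circleMap]
    rw [hexp, hone, poissonKernel_circleMap, div_div, zero_sub, Real.cos_neg, mul_one, one_pow,
      mul_comm (2 * π)]
  rw [hvalue]
  exact (hasSum_im_div_pi_mul_normSq_add_two_pi_mul_int hne).congr_fun hterm

theorem poisson_kernel_sum (a : ℝ) (ha0 : 0 < a) (ha1 : a < 1) (θ : ℝ) :
    ∑' k : ℤ, (-Real.log a) / (π * ((Real.log a) ^ 2 + (θ + 2 * π * k) ^ 2))
      = (1 - a ^ 2) / (2 * π * (1 + a ^ 2 - 2 * a * Real.cos θ)) :=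
  (poisson_kernel_sum_general ha0 ha1.ne θ).tsum_eq
end

section
/- For real a with |a| < 1, ∑_{j=1}^∞ 1/((2j-1) + (-1)^j a)² = (π²/8)·sec²(πa/4)/(1 - tan(πa/4))². -/
open Real

/-!
Euler's product `sin (π z) / (π z) = ∏ (1 - z² / n²)` converges locally uniformly off the integers.
Locally uniform convergence of holomorphic functions survives logarithmic differentiation and
differentiation, so two differentiations turn the product into
`π² / sin² (π z) = ∑ 1 / (z + n)²`, summed over all integers `n`. For `z = (1 - a) / 4` the
summands, taken in the order `n = 0, -1, 1, -2, …`, are `16` times those of the alternating series.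
-/

section

open Filter Topology
open Complex (integerComplement isOpen_compl_range_intCast)

theorem tendstoLocallyUniformlyOn_logDeriv {ι : Type*} {l : Filter ι} [l.NeBot]
    {F : ι → ℂ → ℂ} {f : ℂ → ℂ} {U : Set ℂ} (hU : IsOpen U)
    (hF : TendstoLocallyUniformlyOn F f l U) (hd : ∀ᶠ n in l, DifferentiableOn ℂ (F n) U)
    (hf : ∀ z ∈ U, f z ≠ 0) :
    TendstoLocallyUniformlyOn (fun n ↦ logDeriv (F n)) (logDeriv f) l U :=
  have hfU : DifferentiableOn ℂ f U := hF.differentiableOn hd hU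
  (hF.deriv hd hU).div₀ hF (hfU.deriv hU).continuousOn hfU.continuousOn hf

theorem tendstoLocallyUniformlyOn_sum_cotTerm :
    TendstoLocallyUniformlyOn (fun (n : ℕ) (z : ℂ) ↦ ∑ j ∈ Finset.range n, cotTerm z j)
      (fun z ↦ π * Complex.cot (π * z) - 1 / z) atTop integerComplement := by
  have hsinc : ∀ z ∈ integerComplement, Complex.sin (π * z) / (π * z) ≠ 0 := fun z hz ↦
    div_ne_zero (sin_pi_mul_ne_zero hz)
      (mul_ne_zero (Complex.ofReal_ne_zero.2 pi_ne_zero) (Complex.integerComplement.ne_zero hz))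
  have hlog := tendstoLocallyUniformlyOn_logDeriv isOpen_compl_range_intCast
    HasProdLocallyUniformlyOn_euler_sin_prod.tendstoLocallyUniformlyOn_finsetRange
    (.of_forall fun n ↦ by fun_prop) hsinc
  exact (hlog.congr fun n z hz ↦ logDeriv_prod_sineTerm_eq_sum_cotTerm hz n).congr_right
    fun z hz ↦ logDeriv_sin_div_eq_cot hz

theorem hasDerivAt_one_div_add_const {𝕜 : Type*} [NontriviallyNormedField 𝕜] {z c : 𝕜}
    (h : z + c ≠ 0) : HasDerivAt (fun w ↦ 1 / (w + c)) (-(1 / (z + c) ^ 2)) z := by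
  simpa [one_div, neg_div] using ((hasDerivAt_id z).add_const c).fun_inv h

theorem hasDerivAt_cotTerm {z : ℂ} (hz : z ∈ integerComplement) (n : ℕ) :
    HasDerivAt (fun w ↦ cotTerm w n) (-(1 / (z - (n + 1)) ^ 2 + 1 / (z + (n + 1)) ^ 2)) z := by
  have hneg : z + -((n : ℂ) + 1) ≠ 0 := by
    simpa using Complex.integerComplement_add_ne_zero hz (-(n + 1))
  have hpos : z + ((n : ℂ) + 1) ≠ 0 := by
    simpa using Complex.integerComplement_add_ne_zero hz (n + 1)
  simpa only [cotTerm, neg_add, sub_eq_add_neg] using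
    (hasDerivAt_one_div_add_const hneg).fun_add (hasDerivAt_one_div_add_const hpos)

theorem hasDerivAt_pi_mul_cot_pi_mul {z : ℂ} (hz : Complex.sin (π * z) ≠ 0) :
    HasDerivAt (fun w : ℂ ↦ π * Complex.cot (π * w)) (-(π ^ 2 / Complex.sin (π * z) ^ 2)) z := by
  have hmul : HasDerivAt (fun w : ℂ ↦ (π : ℂ) * w) π z := by
    simpa using (hasDerivAt_id z).const_mul (π : ℂ)
  refine ((hmul.ccos.div hmul.csin hz).const_mul (π : ℂ)).congr_deriv ?_
  field_simp
  linear_combination (-1 : ℂ) * Complex.sin_sq_add_cos_sq (π * z)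

theorem tendsto_sum_one_div_sub_sq_add_one_div_add_sq {z : ℂ} (hz : z ∈ integerComplement) :
    Tendsto (fun n : ℕ ↦ ∑ j ∈ Finset.range n, (1 / (z - (j + 1)) ^ 2 + 1 / (z + (j + 1)) ^ 2))
      atTop (𝓝 (π ^ 2 / Complex.sin (π * z) ^ 2 - 1 / z ^ 2)) := by
  have hsum {w : ℂ} (hw : w ∈ integerComplement) (n : ℕ) :
      HasDerivAt (fun w ↦ ∑ j ∈ Finset.range n, cotTerm w j)
        (∑ j ∈ Finset.range n, -(1 / (w - (j + 1)) ^ 2 + 1 / (w + (j + 1)) ^ 2)) w :=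
    .fun_sum fun j _ ↦ hasDerivAt_cotTerm hw j
  have hlim : HasDerivAt (fun w : ℂ ↦ π * Complex.cot (π * w) - 1 / w)
      (-(π ^ 2 / Complex.sin (π * z) ^ 2 - 1 / z ^ 2)) z := by
    simpa only [one_div, neg_sub'] using
      (hasDerivAt_pi_mul_cot_pi_mul (sin_pi_mul_ne_zero hz)).fun_sub
        (hasDerivAt_inv (Complex.integerComplement.ne_zero hz))
  have hderiv := (tendstoLocallyUniformlyOn_sum_cotTerm.deriv
    (.of_forall fun n w hw ↦ (hsum hw n).differentiableAt.differentiableWithinAt)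
    isOpen_compl_range_intCast).tendsto_at hz
  simp only [Function.comp_apply, (hsum hz _).deriv, hlim.deriv, Finset.sum_neg_distrib] at hderiv
  simpa only [neg_neg] using hderiv.neg

theorem hasSum_one_div_int_add_sq {z : ℂ} (hz : z ∈ integerComplement) :
    HasSum (fun n : ℤ ↦ 1 / (z + n) ^ 2) (π ^ 2 / Complex.sin (π * z) ^ 2) := by
  have hsummable : Summable fun n : ℤ ↦ 1 / (z + n) ^ 2 := by
    simpa using EisensteinSeries.linear_right_summable z 1 le_rfl
  have htail := ((hasSum_nat_add_iff' 1).2 hsummable.hasSum.nat_add_neg).tendsto_sum_nat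
  have hlim : Tendsto (fun n : ℕ ↦ ∑ j ∈ Finset.range n,
      (1 / (z + ((j + 1 : ℕ) : ℤ)) ^ 2 + 1 / (z + (-((j + 1 : ℕ) : ℤ) : ℤ)) ^ 2))
      atTop (𝓝 (π ^ 2 / Complex.sin (π * z) ^ 2 - 1 / z ^ 2)) := by
    refine (tendsto_sum_one_div_sub_sq_add_one_div_add_sq hz).congr fun n ↦
      Finset.sum_congr rfl fun j _ ↦ ?_
    push_cast
    ring
  have heq := tendsto_nhds_unique hlim htail
  simp only [Finset.sum_range_one, Nat.cast_zero, Int.cast_zero, neg_zero, add_zero] at heq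
  convert! hsummable.hasSum using 1
  linear_combination heq

theorem sq_two_mul_intEquivNat_add_one_sub {R : Type*} [CommRing R] (a : R) (n : ℤ) :
    (2 * (Equiv.intEquivNat n : R) + 1 - (-1) ^ Equiv.intEquivNat n * a) ^ 2 =
      (4 * n + 1 - a) ^ 2 := by
  cases n with
  | ofNat m =>
    rw [show Equiv.intEquivNat (Int.ofNat m) = 2 * m from rfl, pow_mul, neg_one_sq, one_pow]
    push_cast [Int.ofNat_eq_natCast]
    ring
  | negSucc m =>
    rw [show Equiv.intEquivNat (Int.negSucc m) = 2 * m + 1 from rfl, pow_succ (-1 : R),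
      pow_mul, neg_one_sq, one_pow]
    push_cast [Int.cast_negSucc]
    ring

theorem mem_integerComplement_of_sin_pi_mul_ne_zero {z : ℂ} (hz : Complex.sin (π * z) ≠ 0) :
    z ∈ integerComplement := by
  rintro ⟨n, rfl⟩
  exact hz (by rw [mul_comm, Complex.sin_int_mul_pi])

theorem hasSum_one_div_odd_sub_alternating_sq {a : ℂ}
    (ha : Complex.sin (π / 4 - π * a / 4) ≠ 0) :
    HasSum (fun j : ℕ ↦ 1 / ((2 * (j : ℂ) + 1) - (-1) ^ j * a) ^ 2)
      (π ^ 2 / (16 * Complex.sin (π / 4 - π * a / 4) ^ 2)) := by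
  have harg : (π / 4 - π * a / 4 : ℂ) = π * ((1 - a) / 4) := by ring
  rw [harg] at ha ⊢
  have hsum := (hasSum_one_div_int_add_sq
    (mem_integerComplement_of_sin_pi_mul_ne_zero ha)).mul_left (1 / 16)
  rw [div_mul_div_comm, one_mul] at hsum
  refine Equiv.intEquivNat.hasSum_iff.1 (hsum.congr_fun fun n ↦ ?_)
  rw [Function.comp_apply, sq_two_mul_intEquivNat_add_one_sub, one_div_mul_one_div]
  ring

theorem two_mul_sin_pi_div_four_sub_sq {w : ℂ} (hw : Complex.cos w ≠ 0) :
    2 * Complex.sin (π / 4 - w) ^ 2 = Complex.cos w ^ 2 * (1 - Complex.tan w) ^ 2 := by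
  have hdouble : 1 - 2 * Complex.sin (π / 4 - w) ^ 2 = 2 * Complex.sin w * Complex.cos w := by
    rw [← Complex.cos_two_mul_eq_one_sub, ← Complex.sin_two_mul, ← Complex.cos_pi_div_two_sub]
    ring_nf
  have hsub : Complex.cos w * (1 - Complex.tan w) = Complex.cos w - Complex.sin w := by
    rw [mul_one_sub, mul_comm _ (Complex.tan w), Complex.tan_mul_cos hw]
  rw [← mul_pow, hsub]
  linear_combination -hdouble - Complex.sin_sq_add_cos_sq w

theorem differentiated_series_strip_exit_general (a : ℂ) (hcos : Complex.cos (π * a / 4) ≠ 0)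
    (htan : Complex.tan (π * a / 4) ≠ 1) :
    HasSum (fun j : ℕ ↦ 1 / ((2 * (j : ℂ) + 1) - (-1) ^ j * a) ^ 2)
      ((π ^ 2 / 8) * (1 / Complex.cos (π * a / 4)) ^ 2 / (1 - Complex.tan (π * a / 4)) ^ 2) := by
  have hsq := two_mul_sin_pi_div_four_sub_sq hcos
  have hsin : Complex.sin (π / 4 - π * a / 4) ≠ 0 := by
    intro h
    simp [h, hcos, sub_eq_zero, htan.symm] at hsq
  convert! hasSum_one_div_odd_sub_alternating_sq hsin using 1
  rw [show (16 : ℂ) = 8 * 2 by norm_num, mul_assoc, hsq, one_div_pow, ← div_eq_mul_one_div,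
    div_div, div_div]

theorem tan_lt_one {x : ℝ} (hl : -(π / 2) < x) (hr : x < π / 4) : Real.tan x < 1 := by
  rw [← Real.tan_pi_div_four]
  exact Real.tan_lt_tan_of_lt_of_lt_pi_div_two hl (by linarith [pi_pos]) hr

end

theorem differentiated_series_strip_exit (a : ℝ) (ha : |a| < 1) :
    ∑' j : ℕ, 1 / ((2 * (j : ℝ) + 1) - (-1) ^ j * a) ^ 2
      = (π ^ 2 / 8) * (1 / Real.cos (π * a / 4)) ^ 2 / (1 - Real.tan (π * a / 4)) ^ 2 := by
  have hpi := pi_pos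
  obtain ⟨hneg, hpos⟩ := abs_lt.1 ha
  have hl : -(π / 2) < π * a / 4 := by nlinarith
  have hr : π * a / 4 < π / 4 := by nlinarith
  have hcos : Real.cos (π * a / 4) ≠ 0 := (Real.cos_pos_of_mem_Ioo ⟨hl, by linarith⟩).ne'
  have htan : Real.tan (π * a / 4) ≠ 1 := (tan_lt_one hl hr).ne
  have hsum := differentiated_series_strip_exit_general a (mod_cast hcos) (mod_cast htan)
  exact (Complex.hasSum_ofReal.1 (mod_cast hsum)).tsum_eq
end
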